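/- arXiv:2204.14150 — 3 statements merged into one kernel-verified Lean document; each statement's English description precedes it below -/
import Mathlib

section
/- Let G be a finite simple connected graph with n vertices. Then the difference between the revised Szeged index and the Szeged index of G satisfies Sz*(G) − Sz(G) = (1/2)·n·Σ_{u ∈ V(G)} deq_G(u,u) − (1/4)·Σ_{(u,v) ∈ V(G)×V(G)} deq_G(u,v). -/
open Finset

attribute [local instance] Classical.propDecidable

variable {V : Type*}

/-- `n_G(s,t)`: the number of vertices strictly closer to `s` than to `t`. -/
noncomputable def closerCount [Fintype V] (G : SimpleGraph V) (s t : V) : ℕ :=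
  (Finset.univ.filter fun w => G.dist w s < G.dist w t).card

/-- `o_G(s,t)`: the number of vertices equidistant from `s` and `t`. -/
noncomputable def equidistCount [Fintype V] (G : SimpleGraph V) (s t : V) : ℕ :=
  (Finset.univ.filter fun w => G.dist w s = G.dist w t).card

lemma equidistCount_comm [Fintype V] (G : SimpleGraph V) (s t : V) :
    equidistCount G s t = equidistCount G t s := by
  unfold equidistCount
  congr 1
  ext w
  simp only [Finset.mem_filter]
  exact and_congr_right fun _ => ⟨Eq.symm, Eq.symm⟩

/-- `o_G` as a function on unordered pairs (edges). -/
noncomputable def equidistSym2 [Fintype V] (G : SimpleGraph V) : Sym2 V → ℕ :=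
  Sym2.lift ⟨fun s t => equidistCount G s t, fun s t => equidistCount_comm G s t⟩

/-- The Wiener index: the sum of distances over unordered pairs of vertices. -/
noncomputable def wiener [Fintype V] (G : SimpleGraph V) : ℕ :=
  ∑ p : Sym2 V, Sym2.lift ⟨fun u v => G.dist u v, fun _ _ => G.dist_comm⟩ p

/-- The Szeged index `Sz(G) = Σ_{{s,t} ∈ E(G)} n_G(s,t) n_G(t,s)`. -/
noncomputable def szeged [Fintype V] (G : SimpleGraph V) : ℕ :=
  ∑ e ∈ G.edgeFinset,
    Sym2.lift ⟨fun s t => closerCount G s t * closerCount G t s,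
      fun _ _ => Nat.mul_comm _ _⟩ e

/-- The revised Szeged index
`Sz*(G) = Σ_{{s,t} ∈ E(G)} (n_G(s,t) + o_G(s,t)/2) (n_G(t,s) + o_G(t,s)/2)`. -/
noncomputable def revisedSzeged [Fintype V] (G : SimpleGraph V) : ℚ :=
  ∑ e ∈ G.edgeFinset,
    Sym2.lift ⟨fun s t =>
      ((closerCount G s t : ℚ) + (equidistCount G s t : ℚ) / 2) *
        ((closerCount G t s : ℚ) + (equidistCount G t s : ℚ) / 2),
      fun _ _ => mul_comm _ _⟩ e

/-- An edge `{s,t}` is `(u,v)`-distance-disparate if `d(u,s) < d(u,t)` and `d(v,s) > d(v,t)`,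
or `d(u,s) > d(u,t)` and `d(v,s) < d(v,t)`. -/
def IsDisparate (G : SimpleGraph V) (u v : V) : Sym2 V → Prop :=
  Sym2.lift ⟨fun s t =>
    (G.dist u s < G.dist u t ∧ G.dist v t < G.dist v s) ∨
      (G.dist u t < G.dist u s ∧ G.dist v s < G.dist v t),
    fun _ _ => propext or_comm⟩

/-- `dis_G(u,v)`: the number of `(u,v)`-distance-disparate edges of `G`. -/
noncomputable def disCount [Fintype V] (G : SimpleGraph V) (u v : V) : ℕ :=
  (G.edgeFinset.filter (IsDisparate G u v)).card

/-- An edge `{s,t}` is `(u,v)`-distance-equal if `d(u,s) = d(u,t)` and `d(v,s) = d(v,t)`. -/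
def IsDistEqual (G : SimpleGraph V) (u v : V) : Sym2 V → Prop :=
  Sym2.lift ⟨fun s t => G.dist u s = G.dist u t ∧ G.dist v s = G.dist v t,
    fun _ _ => propext ⟨fun h => ⟨h.1.symm, h.2.symm⟩, fun h => ⟨h.1.symm, h.2.symm⟩⟩⟩

/-- `deq_G(u,v)`: the number of `(u,v)`-distance-equal edges of `G`. -/
noncomputable def deqCount [Fintype V] (G : SimpleGraph V) (u v : V) : ℕ :=
  (G.edgeFinset.filter (IsDistEqual G u v)).card

/-- A subgraph without cut vertices: it is connected and deleting any single vertex leaves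
it preconnected. -/
def NoCutVertexSub (G : SimpleGraph V) (H : G.Subgraph) : Prop :=
  H.Connected ∧ ∀ v : V, ((H.deleteVerts {v}).coe.Preconnected)

/-- A block of `G`: a maximal connected subgraph without a cut vertex. -/
def IsBlock (G : SimpleGraph V) (B : G.Subgraph) : Prop :=
  NoCutVertexSub G B ∧ ∀ H : G.Subgraph, NoCutVertexSub G H → B ≤ H → B = H

/-- The subgraph `B` is a single edge together with its two endpoints. -/
def IsEdgeBlock (G : SimpleGraph V) (B : G.Subgraph) : Prop :=
  ∃ (u v : V) (h : G.Adj u v), B = G.subgraphOfAdj h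

/-- The subgraph `B` is a cycle (of some length `n ≥ 3`). -/
def IsCycleBlock (G : SimpleGraph V) (B : G.Subgraph) : Prop :=
  ∃ n : ℕ, 3 ≤ n ∧ Nonempty (B.coe ≃g SimpleGraph.cycleGraph n)

/-- A cactus graph: a connected graph in which every block is an edge or a cycle. -/
def IsCactus (G : SimpleGraph V) : Prop :=
  G.Connected ∧ ∀ B : G.Subgraph, IsBlock G B → IsEdgeBlock G B ∨ IsCycleBlock G B

/-!
On a single edge, write `a`, `b` for the numbers of vertices closer to either end and `o` for the
number of equidistant ones. Since `a + b + o = n`, the edge contributes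
`(a + o/2) * (b + o/2) - a * b = n * o / 2 - o ^ 2 / 4` to the difference of the two indices. As a
pair `(u, v)` is distance-equal for an edge exactly when `u` and `v` are both equidistant from its
ends, double counting pairs (edge, vertex) and (edge, pair of vertices) turns the edge sums of `o`
and `o ^ 2` into vertex sums of `deq`.
-/

section Trichotomy

variable {ι α : Type*} [LinearOrder α]

lemma card_filter_lt_add_card_filter_gt_add_card_filter_eq (s : Finset ι) (f g : ι → α) :
    #{i ∈ s | f i < g i} + #{i ∈ s | g i < f i} + #{i ∈ s | f i = g i} = #s := by
  rw [card_filter, card_filter, card_filter, card_eq_sum_ones, ← sum_add_distrib,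
    ← sum_add_distrib]
  refine sum_congr rfl fun i _ => ?_
  rcases lt_trichotomy (f i) (g i) with h | h | h
  · simp [h, h.not_gt, h.ne]
  · simp [h]
  · simp [h, h.not_gt, h.ne']

end Trichotomy

section EquidistantVertices

variable (G : SimpleGraph V)

lemma isDistEqual_iff_self_and_self (u v : V) (e : Sym2 V) :
    IsDistEqual G u v e ↔ IsDistEqual G u u e ∧ IsDistEqual G v v e := by
  induction e with
  | _ s t => simp only [IsDistEqual, Sym2.lift_mk, and_self]

variable [Fintype V]

lemma closerCount_add_closerCount_add_equidistCount (s t : V) :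
    closerCount G s t + closerCount G t s + equidistCount G s t = Fintype.card V := by
  rw [closerCount, closerCount, equidistCount, ← card_univ]
  convert card_filter_lt_add_card_filter_gt_add_card_filter_eq univ (G.dist · s) (G.dist · t)

lemma card_filter_isDistEqual_self (e : Sym2 V) :
    #{u | IsDistEqual G u u e} = equidistSym2 G e := by
  induction e with
  | _ s t => simp only [IsDistEqual, equidistSym2, equidistCount, Sym2.lift_mk, and_self]

lemma card_filter_isDistEqual (e : Sym2 V) :
    #{p : V × V | IsDistEqual G p.1 p.2 e} = equidistSym2 G e ^ 2 := by
  rw [filter_congr fun p _ => isDistEqual_iff_self_and_self G p.1 p.2 e, ← univ_product_univ,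
    filter_product (fun u => IsDistEqual G u u e) (fun v => IsDistEqual G v v e), card_product,
    card_filter_isDistEqual_self, sq]

lemma sum_deqCount_self : ∑ u, deqCount G u u = ∑ e ∈ G.edgeFinset, equidistSym2 G e :=
  calc
    ∑ u, deqCount G u u = ∑ e ∈ G.edgeFinset, #{u | IsDistEqual G u u e} :=
      sum_card_bipartiteAbove_eq_sum_card_bipartiteBelow fun u e => IsDistEqual G u u e
    _ = ∑ e ∈ G.edgeFinset, equidistSym2 G e := by
      simp only [card_filter_isDistEqual_self]

lemma sum_sum_deqCount :
    ∑ u, ∑ v, deqCount G u v = ∑ e ∈ G.edgeFinset, equidistSym2 G e ^ 2 :=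
  calc
    ∑ u, ∑ v, deqCount G u v = ∑ p : V × V, deqCount G p.1 p.2 :=
      (Fintype.sum_prod_type' fun u v => deqCount G u v).symm
    _ = ∑ e ∈ G.edgeFinset, #{p : V × V | IsDistEqual G p.1 p.2 e} :=
      sum_card_bipartiteAbove_eq_sum_card_bipartiteBelow (s := univ) (t := G.edgeFinset)
        fun (p : V × V) e => IsDistEqual G p.1 p.2 e
    _ = ∑ e ∈ G.edgeFinset, equidistSym2 G e ^ 2 := by
      simp only [card_filter_isDistEqual]

end EquidistantVertices

section SzegedIndices

variable [Fintype V] (G : SimpleGraph V)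

lemma revisedSzeged_sub_szeged_eq_edge_sum :
    revisedSzeged G - (szeged G : ℚ) =
      ∑ e ∈ G.edgeFinset,
        ((Fintype.card V : ℚ) * equidistSym2 G e / 2 - (equidistSym2 G e : ℚ) ^ 2 / 4) := by
  rw [revisedSzeged, szeged, Nat.cast_sum, ← sum_sub_distrib]
  refine sum_congr rfl fun e _ => ?_
  induction e with
  | _ s t =>
    simp only [equidistSym2, Sym2.lift_mk]
    rw [equidistCount_comm G t s, ← closerCount_add_closerCount_add_equidistCount G s t]
    push_cast
    ring

/- `G.dist` is `0` between different components, so a vertex outside the component of an edge is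
equidistant from its two ends, just as it would be if that distance were `∞`. -/
theorem revisedSzeged_sub_szeged_eq_vertex_sum_general :
    revisedSzeged G - (szeged G : ℚ) =
      (1 / 2 : ℚ) * (Fintype.card V : ℚ) * ∑ u : V, (deqCount G u u : ℚ)
        - (1 / 4 : ℚ) * ∑ u : V, ∑ v : V, (deqCount G u v : ℚ) := by
  have diagonal_sum : ∑ u, (deqCount G u u : ℚ) = ∑ e ∈ G.edgeFinset, (equidistSym2 G e : ℚ) :=
    mod_cast sum_deqCount_self G
  have pair_sum : ∑ u, ∑ v, (deqCount G u v : ℚ) =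
      ∑ e ∈ G.edgeFinset, (equidistSym2 G e : ℚ) ^ 2 :=
    mod_cast sum_sum_deqCount G
  rw [revisedSzeged_sub_szeged_eq_edge_sum, diagonal_sum, pair_sum, sum_sub_distrib, ← sum_div,
    ← sum_div, ← mul_sum]
  ring

end SzegedIndices

/-- **Corollary (difference of the Szeged indices, vertex form).**
For a finite simple connected graph `G` with `n` vertices,
`Sz*(G) - Sz(G) = (1/2)·n·Σ_{u ∈ V(G)} deq_G(u,u) - (1/4)·Σ_{u,v ∈ V(G)} deq_G(u,v)`. -/
theorem revisedSzeged_sub_szeged_eq_vertex_sum [Fintype V] (G : SimpleGraph V)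
    (hG : G.Connected) :
    revisedSzeged G - (szeged G : ℚ) =
      (1 / 2 : ℚ) * (Fintype.card V : ℚ) * ∑ u : V, (deqCount G u u : ℚ)
        - (1 / 4 : ℚ) * ∑ u : V, ∑ v : V, (deqCount G u v : ℚ) :=
  revisedSzeged_sub_szeged_eq_vertex_sum_general G
end

section
/- Let G be a cactus graph, let u and v be vertices of G, and let 𝔅 be the set of blocks of G. For each block B in 𝔅, let u_B and v_B denote the vertices of B closest (in G) to u and to v, respectively. Then dis_G(u,v) = Σ_{B ∈ 𝔅} dis_G(u_B, v_B). Moreover, an edge e lying in a block B is (u,v)-distance-disparate if and only if it is (u_B, v_B)-distance-disparate. -/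
open Finset

attribute [local instance] Classical.propDecidable

variable {V : Type*}

/-!
In a connected graph, a path between two vertices of a block stays in the block, since adding it as
an ear creates no cut vertex. Hence the vertex `u_B` of a block `B` nearest to `u` lies on every
walk from `u` into `B`, so that `d(u, x) = d(u, u_B) + d(u_B, x)` for `x` in `B`. Replacing `u, v`
by `u_B, v_B` therefore does not change which edges of `B` are disparate. If `C` is another block,
then `u_B` and `v_B` have the same nearest vertex in `C`: otherwise both nearest vertices would lie
in `B` as well, but two blocks share at most one vertex. Thus no edge of `C` is
`(u_B, v_B)`-disparate. Every edge lies in exactly one block, and summing over the blocks gives the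
formula.
-/

/-- `g` is a vertex of `S` closest to `u` in `G`; for `S` the vertex set of a block `B` this is the
paper's `u_B`. Uniqueness is not part of the definition, but holds in blocks of connected graphs. -/
def IsNearest (G : SimpleGraph V) (S : Set V) (u g : V) : Prop :=
  g ∈ S ∧ ∀ x ∈ S, G.dist u g ≤ G.dist u x

variable {G : SimpleGraph V}

lemma preconnected_of_forall_exists_walk {H K : G.Subgraph} (hH : H.Preconnected) (hHK : H ≤ K)
    (hK : ∀ x ∈ K.verts, ∃ y ∈ H.verts, ∃ p : G.Walk x y, p.toSubgraph ≤ K) :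
    K.Preconnected := by
  rw [SimpleGraph.Subgraph.preconnected_iff_forall_exists_walk_subgraph] at hH ⊢
  intro x y hx hy
  obtain ⟨x', hx', p, hp⟩ := hK x hx
  obtain ⟨y', hy', q, hq⟩ := hK y hy
  obtain ⟨r, hr⟩ := hH hx' hy'
  refine ⟨p.append (r.append q.reverse), ?_⟩
  simp only [SimpleGraph.Walk.toSubgraph_append, SimpleGraph.Walk.toSubgraph_reverse, sup_le_iff]
  exact ⟨hp, hr.trans hHK, hq⟩

lemma le_deleteVerts_of_disjoint {H K : G.Subgraph} {s : Set V} (hHK : H ≤ K)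
    (hs : Disjoint H.verts s) : H ≤ K.deleteVerts s := by
  refine ⟨fun x hx => ⟨hHK.1 hx, hs.notMem_of_mem_left hx⟩, fun x y hxy => ?_⟩
  rw [SimpleGraph.Subgraph.deleteVerts_adj]
  exact ⟨hHK.1 hxy.fst_mem, hs.notMem_of_mem_left hxy.fst_mem,
    hHK.1 hxy.snd_mem, hs.notMem_of_mem_left hxy.snd_mem, hHK.2 hxy⟩

lemma deleteVerts_sup (H K : G.Subgraph) (s : Set V) :
    (H ⊔ K).deleteVerts s = H.deleteVerts s ⊔ K.deleteVerts s := by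
  ext x y
  · simp only [SimpleGraph.Subgraph.deleteVerts_verts, SimpleGraph.Subgraph.verts_sup,
      Set.union_sdiff_distrib]
  · simp only [SimpleGraph.Subgraph.deleteVerts_adj, SimpleGraph.Subgraph.verts_sup,
      SimpleGraph.Subgraph.sup_adj, Set.mem_union]
    have hH : H.Adj x y → x ∈ H.verts ∧ y ∈ H.verts := fun h => ⟨h.fst_mem, h.snd_mem⟩
    have hK : K.Adj x y → x ∈ K.verts ∧ y ∈ K.verts := fun h => ⟨h.fst_mem, h.snd_mem⟩
    tauto

lemma exists_walk_deleteVerts_of_isPath {a b w x : V} {p : G.Walk a b} (hp : p.IsPath)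
    (hx : x ∈ p.support) (hxw : x ≠ w) :
    ∃ y, (y = a ∨ y = b) ∧ y ≠ w ∧
      ∃ q : G.Walk x y, q.toSubgraph ≤ p.toSubgraph.deleteVerts {w} := by
  obtain ⟨q, r, -, -, rfl⟩ := hp.mem_support_iff_exists_append.1 hx
  rw [SimpleGraph.Walk.toSubgraph_append]
  by_cases hwq : w ∈ q.support
  · have hwr : w ∉ r.support := fun hwr => hp.ne_of_mem_support_of_append hxw.symm hwq hwr rfl
    refine ⟨b, .inr rfl, ne_of_mem_of_not_mem r.end_mem_support hwr, r,
      le_deleteVerts_of_disjoint le_sup_right ?_⟩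
    rwa [Set.disjoint_singleton_right, r.mem_verts_toSubgraph]
  · refine ⟨a, .inl rfl, ne_of_mem_of_not_mem q.start_mem_support hwq, q.reverse, ?_⟩
    rw [q.toSubgraph_reverse]
    refine le_deleteVerts_of_disjoint le_sup_left ?_
    rwa [Set.disjoint_singleton_right, q.mem_verts_toSubgraph]

lemma dist_eq_add_of_mem_support {u v w : V} (hG : G.Connected) {p : G.Walk u v}
    (hp : p.length = G.dist u v) (hw : w ∈ p.support) :
    G.dist u v = G.dist u w + G.dist w v := by
  obtain ⟨q, r, rfl⟩ := SimpleGraph.Walk.mem_support_iff_exists_append.1 hw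
  refine le_antisymm hG.dist_triangle ?_
  calc G.dist u w + G.dist w v ≤ q.length + r.length :=
        add_le_add (SimpleGraph.dist_le q) (SimpleGraph.dist_le r)
    _ = G.dist u v := by rw [← SimpleGraph.Walk.length_append, hp]

namespace NoCutVertexSub

variable {H K : G.Subgraph}

lemma preconnected_deleteVerts (hH : NoCutVertexSub G H) (w : V) :
    (H.deleteVerts {w}).Preconnected :=
  ⟨hH.2 w⟩

lemma sup_toSubgraph (hH : NoCutVertexSub G H) {a b : V} (ha : a ∈ H.verts) (hb : b ∈ H.verts)
    {p : G.Walk a b} (hp : p.IsPath) : NoCutVertexSub G (H ⊔ p.toSubgraph) := by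
  refine ⟨SimpleGraph.Subgraph.connected_sup hH.1.preconnected p.toSubgraph_connected.preconnected
    ⟨a, ha, p.start_mem_verts_toSubgraph⟩, fun w => ?_⟩
  refine (preconnected_of_forall_exists_walk (hH.preconnected_deleteVerts w)
    (SimpleGraph.Subgraph.deleteVerts_mono le_sup_left) ?_).coe
  rintro x ⟨hx | hx, hxw⟩
  · exact ⟨x, ⟨hx, hxw⟩, .nil,
      (SimpleGraph.singletonSubgraph_le_iff _ _).2 ⟨.inl hx, hxw⟩⟩
  · obtain ⟨y, hy, hyw, q, hq⟩ :=
      exists_walk_deleteVerts_of_isPath hp (p.mem_verts_toSubgraph.1 hx) hxw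
    have hyH : y ∈ H.verts := by rcases hy with rfl | rfl <;> assumption
    exact ⟨y, ⟨hyH, hyw⟩, q, hq.trans (SimpleGraph.Subgraph.deleteVerts_mono le_sup_right)⟩

lemma sup_of_nontrivial_inter (hH : NoCutVertexSub G H) (hK : NoCutVertexSub G K)
    (h : (H.verts ∩ K.verts).Nontrivial) : NoCutVertexSub G (H ⊔ K) := by
  refine ⟨SimpleGraph.Subgraph.connected_sup hH.1.preconnected hK.1.preconnected h.nonempty,
    fun w => ?_⟩
  obtain ⟨c, ⟨hcH, hcK⟩, hcw⟩ := h.exists_ne w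
  rw [deleteVerts_sup]
  exact (SimpleGraph.Subgraph.connected_sup (hH.preconnected_deleteVerts w)
    (hK.preconnected_deleteVerts w) ⟨c, ⟨hcH, hcw⟩, hcK, hcw⟩).preconnected.coe

end NoCutVertexSub

lemma noCutVertexSub_subgraphOfAdj {s t : V} (h : G.Adj s t) :
    NoCutVertexSub G (G.subgraphOfAdj h) := by
  refine ⟨SimpleGraph.Subgraph.subgraphOfAdj_connected h, ?_⟩
  rintro w ⟨x, hx⟩ ⟨y, hy⟩
  by_cases hxy : x = y
  · subst hxy
    rfl
  · refine SimpleGraph.Adj.reachable (SimpleGraph.Subgraph.deleteVerts_adj.2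
      ⟨hx.1, hx.2, hy.1, hy.2, ?_⟩)
    have hx' := hx.1
    have hy' := hy.1
    simp only [SimpleGraph.subgraphOfAdj_verts, Set.mem_insert_iff,
      Set.mem_singleton_iff] at hx' hy'
    rw [SimpleGraph.subgraphOfAdj_adj, Sym2.eq_iff]
    grind

namespace IsBlock

variable {B C : G.Subgraph}

lemma le_of_noCutVertexSub_sup (hB : IsBlock G B) {K : G.Subgraph}
    (h : NoCutVertexSub G (B ⊔ K)) : K ≤ B :=
  le_sup_right.trans (hB.2 _ h le_sup_left).ge

lemma toSubgraph_le (hB : IsBlock G B) {a b : V} (ha : a ∈ B.verts) (hb : b ∈ B.verts)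
    {p : G.Walk a b} (hp : p.IsPath) : p.toSubgraph ≤ B :=
  hB.le_of_noCutVertexSub_sup (hB.1.sup_toSubgraph ha hb hp)

lemma eq_of_nontrivial_inter (hB : IsBlock G B) (hC : IsBlock G C)
    (h : (B.verts ∩ C.verts).Nontrivial) : B = C :=
  le_antisymm
    (hC.le_of_noCutVertexSub_sup (hC.1.sup_of_nontrivial_inter hB.1 (Set.inter_comm _ _ ▸ h)))
    (hB.le_of_noCutVertexSub_sup (hB.1.sup_of_nontrivial_inter hC.1 h))

lemma eq_of_mem_edgeSet (hB : IsBlock G B) (hC : IsBlock G C) {e : Sym2 V}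
    (heB : e ∈ B.edgeSet) (heC : e ∈ C.edgeSet) : B = C := by
  induction e with
  | _ s t =>
    rw [SimpleGraph.Subgraph.mem_edgeSet] at heB heC
    exact hB.eq_of_nontrivial_inter hC ⟨s, ⟨heB.fst_mem, heC.fst_mem⟩,
      t, ⟨heB.snd_mem, heC.snd_mem⟩, heB.ne⟩

end IsBlock

lemma exists_isBlock_mem_edgeSet [Finite V] {e : Sym2 V} (he : e ∈ G.edgeSet) :
    ∃ B : G.Subgraph, IsBlock G B ∧ e ∈ B.edgeSet := by
  induction e with
  | _ s t =>
    rw [SimpleGraph.mem_edgeSet] at he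
    obtain ⟨B, hle, hB⟩ := Finite.exists_le_maximal (noCutVertexSub_subgraphOfAdj he)
    exact ⟨B, ⟨hB.prop, fun H hH hBH => hB.eq_of_le hH hBH⟩,
      hle.2 rfl⟩

lemma exists_isNearest (G : SimpleGraph V) {S : Set V} (hS : S.Nonempty) (u : V) :
    ∃ g, IsNearest G S u g := by
  obtain ⟨g, hg, hmin⟩ := exists_minimalFor_of_wellFoundedLT (· ∈ S) (G.dist u) hS
  exact ⟨g, hg, fun x hx => (le_total _ _).elim id (hmin hx)⟩

namespace IsNearest

variable {B C : G.Subgraph} {u v g h : V}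

lemma eq_of_mem_support {S : Set V} (hg : IsNearest G S u g) {p : G.Walk u g}
    (hp : p.length = G.dist u g) {x : V} (hx : x ∈ p.support) (hxS : x ∈ S) : x = g := by
  by_contra hne
  have : G.dist u x < G.dist u g := calc
    G.dist u x ≤ (p.takeUntil x hx).length := SimpleGraph.dist_le _
    _ < p.length := SimpleGraph.Walk.length_takeUntil_lt_length hx hne
    _ = G.dist u g := hp
  exact this.not_ge (hg.2 x hxS)

/-- If `q` avoided `g`, then a path from `g` to `x` contained in a geodesic from `g` to `u` followed
by `q` would lie in `B`, although its first edge leaves `B`. -/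
lemma mem_support (hG : G.Connected) (hB : IsBlock G B) (hg : IsNearest G B.verts u g)
    {x : V} (hx : x ∈ B.verts) (q : G.Walk u x) : g ∈ q.support := by
  by_contra hgq
  obtain ⟨r, hr⟩ := hG.exists_walk_length_eq_dist u g
  let p : G.Walk g x := (r.reverse.append q).bypass
  have hp : ¬ p.Nil :=
    SimpleGraph.Walk.not_nil_of_ne (ne_of_mem_of_not_mem q.end_mem_support hgq).symm
  have hadj : p.toSubgraph.Adj g p.snd := p.toSubgraph_adj_snd hp
  have hsnd : p.snd ∈ B.verts :=
    (hB.toSubgraph_le hg.1 hx (SimpleGraph.Walk.bypass_isPath _)).1 hadj.snd_mem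
  have hadj' : r.toSubgraph.Adj g p.snd ∨ q.toSubgraph.Adj g p.snd := by
    simpa only [SimpleGraph.Walk.toSubgraph_append, SimpleGraph.Walk.toSubgraph_reverse,
      SimpleGraph.Subgraph.sup_adj] using SimpleGraph.Walk.toSubgraph_bypass_le_toSubgraph.2 hadj
  rcases hadj' with hadj_r | hadj_q
  · exact hadj.ne
      (hg.eq_of_mem_support hr (r.mem_verts_toSubgraph.1 hadj_r.snd_mem) hsnd).symm
  · exact hgq (q.mem_verts_toSubgraph.1 hadj_q.fst_mem)

lemma dist_eq_add (hG : G.Connected) (hB : IsBlock G B) (hg : IsNearest G B.verts u g)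
    {x : V} (hx : x ∈ B.verts) : G.dist u x = G.dist u g + G.dist g x := by
  obtain ⟨q, hq⟩ := hG.exists_walk_length_eq_dist u x
  exact dist_eq_add_of_mem_support hG hq (hg.mem_support hG hB hx q)

lemma mem_verts_of_ne (hG : G.Connected) (hC : IsBlock G C) (hB : B.Preconnected)
    (hu : u ∈ B.verts) (hv : v ∈ B.verts) (hg : IsNearest G C.verts u g)
    (hh : IsNearest G C.verts v h) (hgh : g ≠ h) : g ∈ B.verts := by
  obtain ⟨p, hp⟩ :=
    B.preconnected_iff_forall_exists_walk_subgraph.1 hB hu hv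
  obtain ⟨q, hq⟩ := hG.exists_walk_length_eq_dist v h
  rcases SimpleGraph.Walk.mem_support_append_iff _ _ |>.1
    (hg.mem_support hG hC hh.1 (p.append q)) with hgp | hgq
  · exact hp.1 (p.mem_verts_toSubgraph.2 hgp)
  · exact absurd (hh.eq_of_mem_support hq hgq hg.1) hgh

lemma eq_of_block_ne (hG : G.Connected) (hB : IsBlock G B) (hC : IsBlock G C) (hBC : B ≠ C)
    (hu : u ∈ B.verts) (hv : v ∈ B.verts) (hg : IsNearest G C.verts u g)
    (hh : IsNearest G C.verts v h) : g = h := by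
  by_contra hgh
  have hgB : g ∈ B.verts := hg.mem_verts_of_ne hG hC hB.1.1.preconnected hu hv hh hgh
  have hhB : h ∈ B.verts := hh.mem_verts_of_ne hG hC hB.1.1.preconnected hv hu hg (Ne.symm hgh)
  exact hBC (hB.eq_of_nontrivial_inter hC ⟨g, ⟨hgB, hg.1⟩, h, ⟨hhB, hh.1⟩, hgh⟩)

lemma isDisparate_iff (hG : G.Connected) (hB : IsBlock G B) (hg : IsNearest G B.verts u g)
    (hh : IsNearest G B.verts v h) {e : Sym2 V} (he : e ∈ B.edgeSet) :
    IsDisparate G u v e ↔ IsDisparate G g h e := by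
  induction e with
  | _ s t =>
    rw [SimpleGraph.Subgraph.mem_edgeSet] at he
    simp only [IsDisparate, Sym2.lift_mk, hg.dist_eq_add hG hB he.fst_mem,
      hg.dist_eq_add hG hB he.snd_mem, hh.dist_eq_add hG hB he.fst_mem,
      hh.dist_eq_add hG hB he.snd_mem, add_lt_add_iff_left]

end IsNearest

lemma not_isDisparate_self (G : SimpleGraph V) (u : V) (e : Sym2 V) : ¬ IsDisparate G u u e := by
  induction e with
  | _ s t =>
    simp only [IsDisparate, Sym2.lift_mk]
    omega

lemma IsDisparate.mem_edgeSet_of_mem_verts [Finite V] (hG : G.Connected) {B : G.Subgraph}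
    (hB : IsBlock G B) {u v : V} (hu : u ∈ B.verts) (hv : v ∈ B.verts) {e : Sym2 V}
    (he : e ∈ G.edgeSet) (h : IsDisparate G u v e) : e ∈ B.edgeSet := by
  obtain ⟨C, hC, heC⟩ := exists_isBlock_mem_edgeSet he
  by_cases hBC : B = C
  · rwa [hBC]
  obtain ⟨g, hg⟩ := exists_isNearest G hC.1.1.nonempty u
  obtain ⟨g', hg'⟩ := exists_isNearest G hC.1.1.nonempty v
  obtain rfl : g = g' := hg.eq_of_block_ne hG hB hC hBC hu hv hg'
  exact absurd ((hg.isDisparate_iff hG hC hg' heC).1 h) (not_isDisparate_self G g e)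

lemma card_filter_edgeFinset_eq_sum_blocks [Fintype V] {𝔅 : Finset G.Subgraph}
    (h𝔅 : ∀ B, B ∈ 𝔅 ↔ IsBlock G B) (P : Sym2 V → Prop) :
    #{e ∈ G.edgeFinset | P e} = ∑ B ∈ 𝔅, #{e ∈ G.edgeFinset | e ∈ B.edgeSet ∧ P e} := by
  rw [← card_biUnion]
  · congr 1
    ext e
    simp only [mem_filter, mem_biUnion, SimpleGraph.mem_edgeFinset]
    constructor
    · rintro ⟨he, hP⟩
      obtain ⟨B, hB, heB⟩ := exists_isBlock_mem_edgeSet he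
      exact ⟨B, (h𝔅 B).2 hB, he, heB, hP⟩
    · rintro ⟨B, -, he, -, hP⟩
      exact ⟨he, hP⟩
  · intro B hB C hC hBC
    refine disjoint_left.2 fun e heB heC => hBC ?_
    exact ((h𝔅 B).1 hB).eq_of_mem_edgeSet ((h𝔅 C).1 hC) (mem_filter.1 heB).2.1
      (mem_filter.1 heC).2.1

theorem disCount_eq_sum_blocks_general [Fintype V] (hG : G.Connected) (u v : V)
    (𝔅 : Finset G.Subgraph) (h𝔅 : ∀ B : G.Subgraph, B ∈ 𝔅 ↔ IsBlock G B)
    (uB vB : G.Subgraph → V)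
    (huB : ∀ B ∈ 𝔅, IsNearest G B.verts u (uB B))
    (hvB : ∀ B ∈ 𝔅, IsNearest G B.verts v (vB B)) :
    (disCount G u v = ∑ B ∈ 𝔅, disCount G (uB B) (vB B)) ∧
      (∀ B ∈ 𝔅, ∀ e ∈ B.edgeSet,
        (IsDisparate G u v e ↔ IsDisparate G (uB B) (vB B) e)) := by
  have hiff : ∀ B ∈ 𝔅, ∀ e ∈ B.edgeSet,
      (IsDisparate G u v e ↔ IsDisparate G (uB B) (vB B) e) := fun B hB e he =>
    (huB B hB).isDisparate_iff hG ((h𝔅 B).1 hB) (hvB B hB) he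
  refine ⟨?_, hiff⟩
  unfold disCount
  rw [card_filter_edgeFinset_eq_sum_blocks h𝔅]
  refine sum_congr rfl fun B hB => congrArg card (filter_congr fun e he => ?_)
  have hmem : IsDisparate G (uB B) (vB B) e → e ∈ B.edgeSet := fun h =>
    h.mem_edgeSet_of_mem_verts hG ((h𝔅 B).1 hB) (huB B hB).1 (hvB B hB).1
      (SimpleGraph.mem_edgeFinset.1 he)
  exact ⟨fun h => (hiff B hB e h.1).1 h.2, fun h => ⟨hmem h, (hiff B hB e (hmem h)).2 h⟩⟩

/-- **Lemma (disparate edges split over the blocks of a cactus).**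
For vertices `u, v` of a cactus graph `G` with set of blocks `𝔅`, where `uB B` and `vB B`
denote the vertices of the block `B` closest in `G` to `u` and to `v` respectively,
`dis_G(u,v) = Σ_{B ∈ 𝔅} dis_G(u_B, v_B)`; moreover an edge `e` of a block `B` is
`(u,v)`-distance-disparate iff it is `(u_B, v_B)`-distance-disparate. -/
theorem disCount_eq_sum_blocks [Fintype V] (G : SimpleGraph V) (hG : IsCactus G) (u v : V)
    (𝔅 : Finset G.Subgraph) (h𝔅 : ∀ B : G.Subgraph, B ∈ 𝔅 ↔ IsBlock G B)
    (uB vB : G.Subgraph → V)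
    (huB : ∀ B ∈ 𝔅, uB B ∈ B.verts ∧ ∀ x ∈ B.verts, G.dist u (uB B) ≤ G.dist u x)
    (hvB : ∀ B ∈ 𝔅, vB B ∈ B.verts ∧ ∀ x ∈ B.verts, G.dist v (vB B) ≤ G.dist v x) :
    (disCount G u v = ∑ B ∈ 𝔅, disCount G (uB B) (vB B)) ∧
      (∀ B ∈ 𝔅, ∀ e ∈ B.edgeSet,
        (IsDisparate G u v e ↔ IsDisparate G (uB B) (vB B) e)) := by
  exact disCount_eq_sum_blocks_general hG.1 u v 𝔅 h𝔅 uB vB huB hvB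
end

section
/- Let G be a cactus graph. Then Sz(G) = 2·W(G) if and only if every block of G is a cycle of even length. -/
open Finset

attribute [local instance] Classical.propDecidable

variable {V : Type*}

/-!
Summed over all ordered pairs `(u, v)`, the distances `d(u, v)` give `2 * W(G)`, and the numbers
`dis(u, v)` of disparate edges give `2 * Sz(G)`, as an edge `st` is disparate for `(u, v)` exactly
when one of `u`, `v` is closer to `s` and the other closer to `t`. So it suffices to compare
`dis(u, v)` with `2 * d(u, v)` pair by pair. Both are additive, in the form
`f(u, v) = f(u, w) + f(w, v)`, over a vertex `w` separating `u` from `v`, and two vertices which no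
third one separates lie in a common block. Paths between vertices of a block stay in it, so both
quantities can be computed inside the block: in a single edge `dis ≤ d`, and in the cycle `C_n`
one finds `dis = 2 * d - n % 2` for distinct vertices.
-/

section

open SimpleGraph

variable {W : Type*} {G : SimpleGraph V} {H : SimpleGraph W} {B K : G.Subgraph} {a b s t u v w : V}
  {n : ℕ}

/-! ### Blocks -/

/-- The vertices `a` and `b` are joined by a walk of `G` that stays in the subgraph `K`. Compared
with reachability in `K.coe`, this avoids subtypes and lets one walk serve several subgraphs. -/
def LinkedIn (K : G.Subgraph) (a b : V) : Prop :=
  ∃ p : G.Walk a b, p.toSubgraph ≤ K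

lemma LinkedIn.symm (h : LinkedIn K a b) : LinkedIn K b a := by
  obtain ⟨p, hp⟩ := h
  exact ⟨p.reverse, by rwa [Walk.toSubgraph_reverse]⟩

lemma LinkedIn.trans (h : LinkedIn K a b) (h' : LinkedIn K b w) : LinkedIn K a w := by
  obtain ⟨p, hp⟩ := h
  obtain ⟨q, hq⟩ := h'
  exact ⟨p.append q, by rw [Walk.toSubgraph_append]; exact sup_le hp hq⟩

lemma LinkedIn.mono {K' : G.Subgraph} (h : LinkedIn K a b) (hle : K ≤ K') : LinkedIn K' a b :=
  h.imp fun _ hp => hp.trans hle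

lemma LinkedIn.right_mem (h : LinkedIn K a b) : b ∈ K.verts := by
  obtain ⟨p, hp⟩ := h
  exact hp.1 p.end_mem_verts_toSubgraph

lemma preconnected_iff_forall_linkedIn :
    K.Preconnected ↔ ∀ a ∈ K.verts, ∀ b ∈ K.verts, LinkedIn K a b := by
  rw [Subgraph.preconnected_iff_forall_exists_walk_subgraph]
  exact ⟨fun h _ ha _ hb => h ha hb, fun h _ _ ha hb => h _ ha _ hb⟩

lemma preconnected_of_linkedIn_pair (hw : ∀ w ∈ K.verts, LinkedIn K w a ∨ LinkedIn K w b)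
    (hab : a ∈ K.verts → b ∈ K.verts → LinkedIn K a b) : K.Preconnected := by
  refine preconnected_iff_forall_linkedIn.2 fun x hx y hy => ?_
  rcases hw x hx with hxa | hxb <;> rcases hw y hy with hya | hyb
  · exact hxa.trans hya.symm
  · exact hxa.trans ((hab hxa.right_mem hyb.right_mem).trans hyb.symm)
  · exact hxb.trans ((hab hya.right_mem hxb.right_mem).symm.trans hya.symm)
  · exact hxb.trans hyb.symm

/-- Allowing `X = ∅` treats connectedness and the absence of cut vertices uniformly. -/
lemma noCutVertexSub_iff :
    NoCutVertexSub G K ↔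
      K.verts.Nonempty ∧ ∀ X : Set V, X.Subsingleton → (K.deleteVerts X).Preconnected := by
  simp only [NoCutVertexSub, Subgraph.connected_iff, ← Subgraph.preconnected_iff]
  constructor
  · rintro ⟨⟨hK, hne⟩, hcut⟩
    refine ⟨hne, fun X hX => ?_⟩
    rcases hX.eq_empty_or_singleton with rfl | ⟨x, rfl⟩
    · rwa [Subgraph.deleteVerts_empty]
    · exact hcut x
  · rintro ⟨hne, hK⟩
    have hempty := hK ∅ Set.subsingleton_empty
    rw [Subgraph.deleteVerts_empty] at hempty
    exact ⟨⟨hempty, hne⟩, fun x => hK {x} Set.subsingleton_singleton⟩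

lemma linkedIn_deleteVerts {X : Set V} (p : G.Walk a b) (hp : p.toSubgraph ≤ K)
    (hX : ∀ x ∈ p.support, x ∉ X) : LinkedIn (K.deleteVerts X) a b := by
  refine ⟨p, fun x hx => ⟨hp.1 hx, hX x (p.mem_verts_toSubgraph.1 hx)⟩, fun x y hxy => ?_⟩
  have hx := p.toSubgraph.edge_vert hxy
  have hy := p.toSubgraph.edge_vert hxy.symm
  exact Subgraph.deleteVerts_adj.2 ⟨hp.1 hx, hX x (p.mem_verts_toSubgraph.1 hx),
    hp.1 hy, hX y (p.mem_verts_toSubgraph.1 hy), hp.2 hxy⟩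

lemma linkedIn_deleteVerts_start_or_end {X : Set V} (hX : X.Subsingleton) {p : G.Walk a b}
    (hpath : p.IsPath) (hp : p.toSubgraph ≤ K) (hw : w ∈ p.support) (hwX : w ∉ X) :
    LinkedIn (K.deleteVerts X) w a ∨ LinkedIn (K.deleteVerts X) w b := by
  obtain ⟨q, r, rfl⟩ := p.mem_support_iff_exists_append.1 hw
  rw [Walk.toSubgraph_append, sup_le_iff] at hp
  by_cases hq : ∀ x ∈ q.support, x ∉ X
  · exact .inl (linkedIn_deleteVerts q hp.1 hq).symm
  · push Not at hq
    obtain ⟨x, hxq, hxX⟩ := hq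
    refine .inr (linkedIn_deleteVerts r hp.2 fun y hyr hyX => ?_)
    obtain rfl : y = x := hX hyX hxX
    exact hpath.ne_of_mem_support_of_append (by rintro rfl; exact hwX hyX) hxq hyr rfl

lemma NoCutVertexSub.sup_toSubgraph_s11 (hK : NoCutVertexSub G K) (ha : a ∈ K.verts)
    (hb : b ∈ K.verts) (hab : a ≠ b) {p : G.Walk a b} (hp : p.IsPath) :
    NoCutVertexSub G (K ⊔ p.toSubgraph) := by
  obtain ⟨hne, hK⟩ := noCutVertexSub_iff.1 hK
  refine noCutVertexSub_iff.2 ⟨hne.mono Set.subset_union_left, fun X hX => ?_⟩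
  have hlink : ∀ x ∈ K.verts, ∀ y ∈ K.verts, x ∉ X → y ∉ X →
      LinkedIn ((K ⊔ p.toSubgraph).deleteVerts X) x y := fun x hx y hy hxX hyX =>
    (preconnected_iff_forall_linkedIn.1 (hK X hX) x ⟨hx, hxX⟩ y ⟨hy, hyX⟩).mono
      (Subgraph.deleteVerts_mono le_sup_left)
  refine preconnected_of_linkedIn_pair (a := a) (b := b) ?_ fun ha' hb' =>
    hlink a ha b hb ha'.2 hb'.2
  rintro w ⟨hw | hw, hwX⟩
  · by_cases haX : a ∈ X
    · exact .inr (hlink w hw b hb hwX fun hbX => hab (hX haX hbX))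
    · exact .inl (hlink w hw a ha hwX haX)
  · exact linkedIn_deleteVerts_start_or_end hX hp le_sup_right (p.mem_verts_toSubgraph.1 hw) hwX

lemma IsBlock.toSubgraph_le_s11 (hB : IsBlock G B) (ha : a ∈ B.verts) (hb : b ∈ B.verts)
    (hab : a ≠ b) {p : G.Walk a b} (hp : p.IsPath) : p.toSubgraph ≤ B := by
  rw [hB.2 _ (hB.1.sup_toSubgraph_s11 ha hb hab hp) le_sup_left]
  exact le_sup_right

lemma NoCutVertexSub.exists_isBlock_le [Finite V] (hK : NoCutVertexSub G K) :
    ∃ B, IsBlock G B ∧ K ≤ B := by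
  obtain ⟨B, hKB, hB⟩ := (Set.toFinite {L : G.Subgraph | NoCutVertexSub G L}).exists_le_maximal hK
  exact ⟨B, ⟨hB.prop, fun L hL hle => hB.eq_of_le hL hle⟩, hKB⟩

/-! ### Separating vertices -/

/-- Every walk from `u` to `v` passes through `w`, where `w` may be `u` or `v` itself. Distances and
numbers of disparate edges are additive over such a vertex. -/
def Separates (G : SimpleGraph V) (w u v : V) : Prop :=
  ∀ p : G.Walk u v, w ∈ p.support

lemma Separates.symm (h : Separates G w u v) : Separates G w v u := fun p => by
  simpa using h p.reverse

lemma Separates.left_or_right (h : Separates G w u v) (x : V) :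
    Separates G w u x ∨ Separates G w x v := by
  simp only [Separates]
  by_contra! ⟨⟨p, hp⟩, q, hq⟩
  exact ((p.mem_support_append_iff q).1 (h (p.append q))).elim hp hq

lemma Separates.left_or_right_of_adj (h : Separates G w u v) (hst : G.Adj s t) :
    Separates G w u s ∨ Separates G w t v := by
  simp only [Separates]
  by_contra! ⟨⟨p, hp⟩, q, hq⟩
  have hmem := h (p.append (.cons hst q))
  rw [Walk.mem_support_append_iff, Walk.support_cons, List.mem_cons] at hmem
  rcases hmem with hw | rfl | hw
  · exact hp hw
  · exact hp p.end_mem_support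
  · exact hq hw

lemma Separates.separates_edge (h : Separates G w u v) (hst : G.Adj s t) :
    Separates G w u s ∧ Separates G w u t ∨ Separates G w s v ∧ Separates G w t v := by
  have := h.left_or_right s
  have := h.left_or_right t
  have := h.left_or_right_of_adj hst
  have := h.left_or_right_of_adj hst.symm
  tauto

lemma Separates.dist_eq (hG : G.Connected) (h : Separates G w u v) :
    G.dist u v = G.dist u w + G.dist w v := by
  refine hG.dist_triangle.antisymm ?_
  obtain ⟨p, hp⟩ := hG.exists_walk_length_eq_dist u v
  obtain ⟨q, r, rfl⟩ := p.mem_support_iff_exists_append.1 (h p)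
  rw [← hp, Walk.length_append]
  exact add_le_add (dist_le q) (dist_le r)

/-- The union of all paths from `u` to `v` has no cut vertex. -/
lemma exists_isBlock_or_exists_separates [Finite V] (hG : G.Connected) (u v : V) :
    (∃ B, IsBlock G B ∧ u ∈ B.verts ∧ v ∈ B.verts) ∨ ∃ w, w ≠ u ∧ w ≠ v ∧ Separates G w u v := by
  refine or_iff_not_imp_right.2 fun hsep => ?_
  simp only [Separates] at hsep
  push Not at hsep
  let K : G.Subgraph := ⨆ p : G.Path u v, p.1.toSubgraph
  have hle (p : G.Path u v) : p.1.toSubgraph ≤ K := le_iSup (fun p : G.Path u v => p.1.toSubgraph) p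
  obtain ⟨p₀, hp₀, -⟩ := hG.exists_path_of_dist u v
  have hu : u ∈ K.verts := (hle ⟨p₀, hp₀⟩).1 p₀.start_mem_verts_toSubgraph
  have hv : v ∈ K.verts := (hle ⟨p₀, hp₀⟩).1 p₀.end_mem_verts_toSubgraph
  have hK : NoCutVertexSub G K := by
    refine noCutVertexSub_iff.2 ⟨⟨u, hu⟩, fun X hX => ?_⟩
    refine preconnected_of_linkedIn_pair (a := u) (b := v) ?_ fun huX hvX => ?_
    · rintro w ⟨hw, hwX⟩
      obtain ⟨p, hp⟩ : ∃ p : G.Path u v, w ∈ p.1.support := by simpa [K] using hw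
      exact linkedIn_deleteVerts_start_or_end hX p.2 (hle p) hp hwX
    · rcases hX.eq_empty_or_singleton with rfl | ⟨x, rfl⟩
      · exact linkedIn_deleteVerts p₀ (hle ⟨p₀, hp₀⟩) (by simp)
      · obtain ⟨p, hp⟩ := hsep x (fun h => huX.2 h.symm) (fun h => hvX.2 h.symm)
        refine linkedIn_deleteVerts p.bypass (hle ⟨p.bypass, p.bypass_isPath⟩) ?_
        rintro y hy rfl
        exact hp (p.support_bypass_subset_support hy)
  obtain ⟨B, hB, hKB⟩ := hK.exists_isBlock_le
  exact ⟨B, hB, hKB.1 hu, hKB.1 hv⟩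

theorem block_induction [Finite V] (hG : G.Connected) {P : V → V → Prop}
    (block : ∀ B : G.Subgraph, IsBlock G B → ∀ u ∈ B.verts, ∀ v ∈ B.verts, P u v)
    (separates : ∀ u w v, Separates G w u v → P u w → P w v → P u v) (u v : V) : P u v := by
  induction hd : G.dist u v using Nat.strong_induction_on generalizing u v with
  | _ d ih =>
    rcases exists_isBlock_or_exists_separates hG u v with ⟨B, hB, hu, hv⟩ | ⟨w, hwu, hwv, hw⟩
    · exact block B hB u hu v hv
    · have := hw.dist_eq hG
      have := hG.pos_dist_of_ne hwu.symm
      have := hG.pos_dist_of_ne hwv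
      exact separates u w v hw (ih _ (by omega) u w rfl) (ih _ (by omega) w v rfl)

/-! ### Disparate edges -/

lemma disCount_comm [Fintype V] (G : SimpleGraph V) (u v : V) :
    disCount G u v = disCount G v u := by
  refine congrArg card (filter_congr fun e _ => ?_)
  induction e with
  | _ s t =>
    simp only [IsDisparate, Sym2.lift_mk]
    omega

lemma disCount_self [Fintype V] (G : SimpleGraph V) (u : V) : disCount G u u = 0 := by
  refine card_eq_zero.2 (filter_eq_empty_iff.2 fun e _ => ?_)
  induction e with
  | _ s t =>
    simp only [IsDisparate, Sym2.lift_mk]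
    omega

lemma disCount_eq_card {ι : Type*} [Fintype V] [Fintype ι] {f : ι → Sym2 V} (hf : f.Injective)
    (hrange : Set.range f = G.edgeSet) (u v : V) :
    disCount G u v = #{x | IsDisparate G u v (f x)} := by
  have hedge : G.edgeFinset = univ.image f := coe_injective (by simp [hrange])
  rw [disCount, hedge, filter_image, card_image_of_injective _ hf]

/-- One end of `uv` sees the edge `st` through `w`, so it compares `s` with `t` just as `w` does. -/
lemma Separates.isDisparate_iff (hG : G.Connected) (h : Separates G w u v) (hst : G.Adj s t) :
    IsDisparate G u v s(s, t) ↔ IsDisparate G u w s(s, t) ∨ IsDisparate G w v s(s, t) := by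
  simp only [IsDisparate, Sym2.lift_mk]
  rcases h.separates_edge hst with ⟨hs, ht⟩ | ⟨hs, ht⟩
  · have := hs.dist_eq hG
    have := ht.dist_eq hG
    omega
  · have := hs.symm.dist_eq hG
    have := ht.symm.dist_eq hG
    omega

lemma Separates.not_isDisparate_and (hG : G.Connected) (h : Separates G w u v) (hst : G.Adj s t) :
    ¬(IsDisparate G u w s(s, t) ∧ IsDisparate G w v s(s, t)) := by
  simp only [IsDisparate, Sym2.lift_mk]
  rcases h.separates_edge hst with ⟨hs, ht⟩ | ⟨hs, ht⟩
  · have := hs.dist_eq hG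
    have := ht.dist_eq hG
    omega
  · have := hs.symm.dist_eq hG
    have := ht.symm.dist_eq hG
    omega

lemma Separates.disCount_eq [Fintype V] (hG : G.Connected) (h : Separates G w u v) :
    disCount G u v = disCount G u w + disCount G w v := by
  unfold disCount
  rw [← card_union_of_disjoint, ← filter_or]
  · refine congrArg card (filter_congr fun e he => ?_)
    induction e with
    | _ s t => exact h.isDisparate_iff hG (mem_edgeFinset.1 he)
  · refine disjoint_filter.2 fun e he => ?_
    induction e with
    | _ s t => exact not_and.1 (h.not_isDisparate_and hG (mem_edgeFinset.1 he))

lemma dist_lt_dist_of_mem_support (hG : G.Connected) (hlt : G.dist u s < G.dist u t)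
    {p : G.Walk u s} (hp : p.length = G.dist u s) (hw : w ∈ p.support) :
    G.dist w s < G.dist w t := by
  obtain ⟨q, r, rfl⟩ := p.mem_support_iff_exists_append.1 hw
  have := dist_le q
  have := dist_le r
  have : G.dist u t ≤ G.dist u w + G.dist w t := hG.dist_triangle
  rw [Walk.length_append] at hp
  omega

/-- Geodesics from `u` to `s` and from `t` to `v` consist of vertices closer to `s` and of vertices
closer to `t`, so the edge `st` joins them to a path. -/
lemma exists_isPath_mem_edges (hG : G.Connected) (hst : G.Adj s t)
    (hu : G.dist u s < G.dist u t) (hv : G.dist v t < G.dist v s) :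
    ∃ p : G.Walk u v, p.IsPath ∧ s(s, t) ∈ p.edges := by
  obtain ⟨p, hp, hplen⟩ := hG.exists_path_of_dist u s
  obtain ⟨q, hq, hqlen⟩ := hG.exists_path_of_dist v t
  refine ⟨p.append (.cons hst q.reverse), ?_, by simp⟩
  rw [Walk.isPath_def, Walk.support_append, Walk.support_cons, List.tail_cons, List.nodup_append]
  refine ⟨hp.support_nodup, hq.reverse.support_nodup, ?_⟩
  rintro x hxp y hyq rfl
  rw [Walk.support_reverse, List.mem_reverse] at hyq
  exact (dist_lt_dist_of_mem_support hG hu hplen hxp).asymm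
    (dist_lt_dist_of_mem_support hG hv hqlen hyq)

lemma IsBlock.adj_of_isDisparate (hG : G.Connected) (hB : IsBlock G B) (hu : u ∈ B.verts)
    (hv : v ∈ B.verts) (hst : G.Adj s t) (h : IsDisparate G u v s(s, t)) : B.Adj s t := by
  have huv : u ≠ v := by
    rintro rfl
    simp only [IsDisparate, Sym2.lift_mk] at h
    omega
  have adj_of_mem_edges {p : G.Walk u v} (hp : p.IsPath) {x y : V} (hxy : s(x, y) ∈ p.edges) :
      B.Adj x y := (hB.toSubgraph_le_s11 hu hv huv hp).2 (Walk.adj_toSubgraph_iff_mem_edges.2 hxy)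
  rcases h with ⟨hus, hvt⟩ | ⟨hut, hvs⟩
  · obtain ⟨p, hp, hmem⟩ := exists_isPath_mem_edges hG hst hus hvt
    exact adj_of_mem_edges hp hmem
  · obtain ⟨p, hp, hmem⟩ := exists_isPath_mem_edges hG hst.symm hut hvs
    exact (adj_of_mem_edges hp hmem).symm

lemma IsBlock.dist_eq_of_iso (hG : G.Connected) (hB : IsBlock G B) (φ : B.coe ≃g H)
    (u v : B.verts) : G.dist u v = H.dist (φ u) (φ v) := by
  apply le_antisymm
  · have hH : H.Connected := φ.connected_iff.1 hB.1.1.coe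
    obtain ⟨p, hp⟩ := hH.exists_walk_length_eq_dist (φ u) (φ v)
    calc G.dist u v ≤ (p.map (B.hom.comp φ.symm.toHom)).length := by
          simpa using dist_le (p.map (B.hom.comp φ.symm.toHom))
      _ = H.dist (φ u) (φ v) := by rw [Walk.length_map, hp]
  · rcases eq_or_ne u v with rfl | huv
    · simp
    obtain ⟨p, hp, hplen⟩ := hG.exists_path_of_dist u v
    have hle := hB.toSubgraph_le_s11 u.2 v.2 (Subtype.coe_ne_coe.2 huv) hp
    calc H.dist (φ u) (φ v)
        ≤ ((p.mapToSubgraph.map (Subgraph.inclusion hle)).map φ.toHom).length := dist_le _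
      _ = (p.mapToSubgraph.map p.toSubgraph.hom).length := by simp only [Walk.length_map]
      _ = G.dist u v := (congrArg Walk.length p.map_mapToSubgraph_hom).trans hplen

lemma disCount_eq_of_forall_dist_eq [Fintype V] [Fintype W] {f : W → V} (hf : f.Injective)
    (hdist : ∀ x y, G.dist (f x) (f y) = H.dist x y) {u v : W}
    (hrange : ∀ s t, G.Adj s t → IsDisparate G (f u) (f v) s(s, t) →
      s ∈ Set.range f ∧ t ∈ Set.range f) :
    disCount G (f u) (f v) = disCount H u v := by
  have hadj (x y : W) : G.Adj (f x) (f y) ↔ H.Adj x y := by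
    rw [← dist_eq_one_iff_adj, hdist, dist_eq_one_iff_adj]
  have hdisp (x y : W) : IsDisparate G (f u) (f v) s(f x, f y) ↔ IsDisparate H u v s(x, y) := by
    simp only [IsDisparate, Sym2.lift_mk, hdist]
  unfold disCount
  rw [← card_image_of_injective _ (Sym2.map.injective hf)]
  congr 1
  ext e
  simp only [mem_filter, mem_image, mem_edgeFinset]
  constructor
  · induction e with
    | _ s t =>
      rintro ⟨hst, hd⟩
      obtain ⟨⟨x, rfl⟩, y, rfl⟩ := hrange s t hst hd
      exact ⟨s(x, y), ⟨(hadj x y).1 hst, (hdisp x y).1 hd⟩, rfl⟩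
  · rintro ⟨e, ⟨he, hd⟩, rfl⟩
    induction e with
    | _ x y => exact ⟨(hadj x y).2 he, (hdisp x y).2 hd⟩

lemma IsBlock.disCount_eq_of_iso [Fintype V] [Fintype W] (hG : G.Connected) (hB : IsBlock G B)
    (φ : B.coe ≃g H) (u v : B.verts) : disCount G u v = disCount H (φ u) (φ v) := by
  have hrange (s : V) : s ∈ B.verts → s ∈ Set.range fun x => (φ.symm x : V) := fun hs =>
    ⟨φ ⟨s, hs⟩, by simp⟩
  have := disCount_eq_of_forall_dist_eq (G := G) (H := H) (f := fun x => (φ.symm x : V))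
    (u := φ u) (v := φ v) (Subtype.val_injective.comp φ.symm.injective)
    (fun x y => by simp [hB.dist_eq_of_iso hG φ]) fun s t hst hd => by
      simp only [RelIso.symm_apply_apply] at hd
      have hBst := hB.adj_of_isDisparate hG u.2 v.2 hst hd
      exact ⟨hrange s (B.edge_vert hBst), hrange t (B.edge_vert hBst.symm)⟩
  simpa using this

/-! ### Cycles -/

lemma dist_eq_of_forall_adj {f : V → ℕ} (hu : f u = 0) (hadj : ∀ x y, G.Adj x y → f x ≤ f y + 1)
    (hdesc : ∀ x, x ≠ u → ∃ y, G.Adj x y ∧ f y < f x) (v : V) : G.dist u v = f v := by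
  have le_length {x : V} (p : G.Walk x u) : f x ≤ p.length := by
    induction p with
    | nil => exact hu.le
    | cons h p ih => exact (hadj _ _ h).trans (Nat.succ_le_succ (ih hu hdesc))
  have exists_walk (x : V) : ∃ p : G.Walk x u, p.length ≤ f x := by
    induction hx : f x using Nat.strong_induction_on generalizing x with
    | _ k ih =>
      rcases eq_or_ne x u with rfl | hne
      · exact ⟨.nil, Nat.zero_le _⟩
      · obtain ⟨y, hxy, hlt⟩ := hdesc x hne
        obtain ⟨p, hp⟩ := ih (f y) (hx ▸ hlt) y rfl
        exact ⟨.cons hxy p, by rw [Walk.length_cons]; omega⟩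
  obtain ⟨p, hp⟩ := exists_walk v
  rw [dist_comm]
  apply ((dist_le p).trans hp).antisymm
  obtain ⟨q, hq⟩ := p.reachable.exists_walk_length_eq_dist
  exact hq ▸ le_length q

lemma fin_val_sub_eq_ite (i j : Fin n) :
    (i - j).val = if j.val ≤ i.val then i.val - j.val else n + i.val - j.val := by
  split_ifs with h
  · exact Fin.sub_val_of_le h
  · exact Fin.coe_sub_iff_lt.2 (not_le.1 h)

lemma fin_val_add_one_eq_ite [NeZero n] (hn : 2 ≤ n) (i : Fin n) :
    (i + 1).val = if i.val + 1 = n then 0 else i.val + 1 := by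
  rw [Fin.val_add_eq_ite, Fin.val_one', Nat.mod_eq_of_lt hn]
  split_ifs <;> omega

lemma cycleGraph_dist (i j : Fin n) :
    (cycleGraph n).dist i j = min (i - j).val (j - i).val := by
  refine dist_eq_of_forall_adj (f := fun j => min (i - j).val (j - i).val) ?_ ?_ ?_ j
  · simp [fin_val_sub_eq_ite]
  · intro x y hxy
    simp only [cycleGraph_adj', fin_val_sub_eq_ite] at hxy ⊢
    split_ifs at hxy ⊢ <;> omega
  · intro x hx
    have : NeZero n := ⟨x.pos.ne'⟩
    have hn : 2 ≤ n := by omega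
    by_cases hlt : (i - x).val ≤ (x - i).val
    · refine ⟨x + 1, ?_⟩
      simp only [cycleGraph_adj', fin_val_sub_eq_ite, fin_val_add_one_eq_ite hn] at hlt ⊢
      split_ifs at hlt ⊢ <;> omega
    · obtain ⟨y, rfl⟩ : ∃ y, x = y + 1 := ⟨x - 1, by simp⟩
      refine ⟨y, ?_⟩
      simp only [cycleGraph_adj', fin_val_sub_eq_ite, fin_val_add_one_eq_ite hn] at hlt ⊢
      split_ifs at hlt ⊢ <;> omega

lemma cycleGraph_dist_add (i x : Fin n) :
    (cycleGraph n).dist i (i + x) = min x.val (n - x.val) := by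
  have : NeZero n := ⟨x.pos.ne'⟩
  rw [cycleGraph_dist, add_sub_cancel_left, sub_add_cancel_left, Fin.val_neg, min_comm]
  split_ifs with hx
  · simp [hx]
  · rfl

lemma cycleGraph_dist_add_lt_iff [NeZero n] (hn : 2 ≤ n) (i x : Fin n) :
    (cycleGraph n).dist i (i + x) < (cycleGraph n).dist i (i + (x + 1)) ↔ 2 * x.val + 1 < n := by
  rw [cycleGraph_dist_add, cycleGraph_dist_add, fin_val_add_one_eq_ite hn]
  split_ifs <;> omega

lemma cycleGraph_dist_add_gt_iff [NeZero n] (hn : 2 ≤ n) (i x : Fin n) :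
    (cycleGraph n).dist i (i + (x + 1)) < (cycleGraph n).dist i (i + x) ↔ n < 2 * x.val + 1 := by
  rw [cycleGraph_dist_add, cycleGraph_dist_add, fin_val_add_one_eq_ite hn]
  split_ifs <;> omega

lemma range_cycleGraph_edge [NeZero n] (hn : 2 ≤ n) (i : Fin n) :
    Set.range (fun x => s(i + x, i + (x + 1))) = (cycleGraph n).edgeSet := by
  have val_eq_one (y : Fin n) : y.val = 1 ↔ y = 1 := by
    rw [Fin.ext_iff, Fin.val_one', Nat.mod_eq_of_lt hn]
  ext e
  induction e with
  | _ s t =>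
    rw [mem_edgeSet, cycleGraph_adj', val_eq_one, val_eq_one, sub_eq_iff_eq_add',
      sub_eq_iff_eq_add']
    simp only [Set.mem_range, Sym2.eq_iff]
    constructor
    · rintro ⟨x, ⟨rfl, rfl⟩ | ⟨rfl, rfl⟩⟩
      · exact .inr (by abel)
      · exact .inl (by abel)
    · rintro (rfl | rfl)
      · exact ⟨t - i, .inr ⟨by abel, by abel⟩⟩
      · exact ⟨s - i, .inl ⟨by abel, by abel⟩⟩

lemma cycleGraph_edge_injective [NeZero n] (hn : 3 ≤ n) (i : Fin n) :
    Function.Injective fun x => s(i + x, i + (x + 1)) := by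
  intro x y hxy
  simp only [Sym2.eq_iff, add_right_inj, Fin.ext_iff,
    fin_val_add_one_eq_ite (by omega : 2 ≤ n)] at hxy
  split_ifs at hxy <;> omega

/-- Going once round the cycle from `i`, distances from `i` rise on the first half of the edges and
fall on the second half; for `i + d` the halves are shifted by `d`. -/
lemma isDisparate_cycleGraph_iff [NeZero n] (hn : 2 ≤ n) (i x : Fin n) {d : Fin n}
    (hd : 2 * d.val ≤ n) :
    IsDisparate (cycleGraph n) i (i + d) s(i + x, i + (x + 1)) ↔
      x.val < d ∨ (n + 1) / 2 ≤ x.val ∧ x.val < n / 2 + d := by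
  have hx : i + x = i + d + (x - d) := by abel
  have hx' : i + (x + 1) = i + d + (x - d + 1) := by abel
  simp only [IsDisparate, Sym2.lift_mk]
  rw [cycleGraph_dist_add_lt_iff hn, cycleGraph_dist_add_gt_iff hn, hx, hx',
    cycleGraph_dist_add_lt_iff hn, cycleGraph_dist_add_gt_iff hn, fin_val_sub_eq_ite]
  split_ifs <;> omega

lemma disCount_cycleGraph_add [NeZero n] (hn : 3 ≤ n) (i : Fin n) {d : Fin n}
    (hd : 2 * d.val ≤ n) : disCount (cycleGraph n) i (i + d) = 2 * d.val - n % 2 := by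
  have hlt (x : ℕ) (hx : x ∈ range d ∪ Ico ((n + 1) / 2) (n / 2 + d)) : x < n := by
    rw [mem_union, mem_range, mem_Ico] at hx
    omega
  have hdisj : Disjoint (range d) (Ico ((n + 1) / 2) (n / 2 + d)) := by
    refine disjoint_left.2 fun x hx hx' => ?_
    rw [mem_range] at hx
    rw [mem_Ico] at hx'
    omega
  calc disCount (cycleGraph n) i (i + d)
      = #{x | IsDisparate (cycleGraph n) i (i + d) s(i + x, i + (x + 1))} :=
        disCount_eq_card (cycleGraph_edge_injective hn i) (range_cycleGraph_edge (by omega) i) ..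
    _ = #((range d ∪ Ico ((n + 1) / 2) (n / 2 + d)).attachFin hlt) := by
        congr 1
        ext x
        rw [mem_filter_univ, isDisparate_cycleGraph_iff (by omega) i x hd, mem_attachFin,
          mem_union, mem_range, mem_Ico]
    _ = 2 * d.val - n % 2 := by
        rw [card_attachFin, card_union_of_disjoint hdisj, card_range, Nat.card_Ico]
        omega

/-- At `u = v` with `n` odd the truncated subtraction `0 - 1` gives the correct value `0`. -/
theorem disCount_cycleGraph (hn : 3 ≤ n) (u v : Fin n) :
    disCount (cycleGraph n) u v = 2 * (cycleGraph n).dist u v - n % 2 := by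
  have : NeZero n := ⟨by omega⟩
  wlog hd : 2 * (v - u).val ≤ n generalizing u v
  · rw [disCount_comm, SimpleGraph.dist_comm]
    refine this v u ?_
    rw [← neg_sub, Fin.val_neg]
    split_ifs <;> omega
  obtain ⟨d, rfl⟩ : ∃ d, v = u + d := ⟨v - u, by abel⟩
  rw [add_sub_cancel_left] at hd
  rw [disCount_cycleGraph_add hn u hd, cycleGraph_dist_add, min_eq_left (by omega)]

/-! ### Cacti -/

lemma IsBlock.disCount_eq_of_iso_cycleGraph [Fintype V] (hG : G.Connected) (hB : IsBlock G B)
    (hn : 3 ≤ n) (φ : B.coe ≃g cycleGraph n) (hu : u ∈ B.verts) (hv : v ∈ B.verts) :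
    disCount G u v = 2 * G.dist u v - n % 2 := by
  have hcount := hB.disCount_eq_of_iso hG φ ⟨u, hu⟩ ⟨v, hv⟩
  have hdist := hB.dist_eq_of_iso hG φ ⟨u, hu⟩ ⟨v, hv⟩
  rwa [disCount_cycleGraph hn, ← hdist] at hcount

lemma IsBlock.even_of_disCount_eq [Fintype V] (hG : G.Connected) (hB : IsBlock G B)
    (hn : 3 ≤ n) (φ : B.coe ≃g cycleGraph n) (h : ∀ u v, disCount G u v = 2 * G.dist u v) :
    Even n := by
  obtain ⟨x, y, hxy⟩ := (Fin.nontrivial_iff_two_le.2 (by omega : 2 ≤ n)).exists_pair_ne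
  have hpos := hG.pos_dist_of_ne (Subtype.coe_ne_coe.2 (φ.symm.injective.ne hxy))
  have hcount := hB.disCount_eq_of_iso_cycleGraph hG hn φ (φ.symm x).2 (φ.symm y).2
  rw [h] at hcount
  rw [Nat.even_iff]
  omega

lemma IsEdgeBlock.disCount_le_dist [Fintype V] (hG : G.Connected) (hB : IsBlock G B)
    (hE : IsEdgeBlock G B) (hu : u ∈ B.verts) (hv : v ∈ B.verts) :
    disCount G u v ≤ G.dist u v := by
  rcases eq_or_ne u v with rfl | huv
  · exact (disCount_self G u).trans_le (Nat.zero_le _)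
  obtain ⟨a, b, hab, rfl⟩ := hE
  have hsub : G.edgeFinset.filter (IsDisparate G u v) ⊆ {s(a, b)} := fun e he => by
    rw [mem_filter, mem_edgeFinset] at he
    induction e with
    | _ s t =>
      have hst := hB.adj_of_isDisparate hG hu hv he.1 he.2
      rw [subgraphOfAdj_adj] at hst
      exact mem_singleton.2 hst.symm
  calc disCount G u v ≤ #{s(a, b)} := card_le_card hsub
    _ = 1 := card_singleton _
    _ ≤ G.dist u v := hG.pos_dist_of_ne huv

lemma IsBlock.not_isEdgeBlock_of_disCount_eq [Fintype V] (hG : G.Connected) (hB : IsBlock G B)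
    (h : ∀ u v, disCount G u v = 2 * G.dist u v) : ¬IsEdgeBlock G B := by
  rintro ⟨a, b, hab, rfl⟩
  have hle := IsEdgeBlock.disCount_le_dist hG hB ⟨a, b, hab, rfl⟩ (u := a) (v := b) (by simp)
    (by simp)
  rw [h, dist_eq_one_iff_adj.2 hab] at hle
  omega

lemma IsCactus.disCount_le [Fintype V] (hG : IsCactus G) (u v : V) :
    disCount G u v ≤ 2 * G.dist u v := by
  refine block_induction (P := fun u v => disCount G u v ≤ 2 * G.dist u v) hG.1
    (fun B hB u hu v hv => ?_) (fun u w v hw huw hwv => ?_) u v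
  · rcases hG.2 B hB with hE | ⟨n, hn, ⟨φ⟩⟩
    · exact (hE.disCount_le_dist hG.1 hB hu hv).trans (by omega)
    · exact (hB.disCount_eq_of_iso_cycleGraph hG.1 hn φ hu hv).trans_le (Nat.sub_le _ _)
  · rw [hw.disCount_eq hG.1, hw.dist_eq hG.1]
    omega

/-! ### Wiener and Szeged indices as sums over ordered pairs -/

lemma sum_sym2_mk_eq_two_mul [Fintype V] {f : Sym2 V → ℕ} (hf : ∀ v, f s(v, v) = 0) :
    ∑ p : V × V, f s(p.1, p.2) = 2 * ∑ e, f e := by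
  rw [← sum_fiberwise univ fun p : V × V => s(p.1, p.2), mul_sum]
  refine sum_congr rfl fun e _ => ?_
  induction e with
  | _ s t =>
    have hfiber : (univ.filter fun p : V × V => s(p.1, p.2) = s(s, t)) = {(s, t), (t, s)} := by
      ext ⟨x, y⟩
      simp
    rw [hfiber]
    rcases eq_or_ne s t with rfl | hst
    · simp [hf]
    · rw [sum_pair (by simp [hst]), Sym2.eq_swap, two_mul]

lemma two_mul_wiener [Fintype V] (G : SimpleGraph V) :
    2 * wiener G = ∑ p : V × V, G.dist p.1 p.2 :=
  (sum_sym2_mk_eq_two_mul fun _ => SimpleGraph.dist_self).symm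

lemma card_filter_isDisparate [Fintype V] (G : SimpleGraph V) (s t : V) :
    #{p : V × V | IsDisparate G p.1 p.2 s(s, t)} = 2 * (closerCount G s t * closerCount G t s) := by
  let S : Finset V := {w | G.dist w s < G.dist w t}
  let T : Finset V := {w | G.dist w t < G.dist w s}
  have hST : Disjoint S T := disjoint_filter.2 fun _ _ => lt_asymm
  calc #{p : V × V | IsDisparate G p.1 p.2 s(s, t)}
      = #(S ×ˢ T ∪ T ×ˢ S) := by
        congr 1
        ext p
        simp only [S, T, mem_filter_univ, mem_union, mem_product]
        rfl
    _ = #S * #T + #T * #S := by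
        rw [card_union_of_disjoint (disjoint_product.2 (.inl hST)), card_product, card_product]
    _ = 2 * (#S * #T) := by ring

lemma two_mul_szeged [Fintype V] (G : SimpleGraph V) :
    2 * szeged G = ∑ p : V × V, disCount G p.1 p.2 := by
  simp only [szeged, disCount, card_filter]
  rw [sum_comm, mul_sum]
  refine sum_congr rfl fun e _ => ?_
  induction e with
  | _ s t => rw [← card_filter, card_filter_isDisparate, Sym2.lift_mk]

lemma szeged_eq_two_mul_wiener_iff_of_disCount_le [Fintype V]
    (h : ∀ u v, disCount G u v ≤ 2 * G.dist u v) :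
    szeged G = 2 * wiener G ↔ ∀ u v, disCount G u v = 2 * G.dist u v := by
  rw [← Nat.mul_right_inj two_ne_zero, two_mul_wiener, two_mul_szeged, mul_sum,
    sum_eq_sum_iff_of_le fun p _ => h p.1 p.2]
  simp

end

/-- **Theorem (equality case).** For a cactus graph `G`, `Sz(G) = 2·W(G)` if and only if
every block of `G` is a cycle of even length. -/
theorem szeged_eq_two_wiener_iff [Fintype V] (G : SimpleGraph V) (hG : IsCactus G) :
    szeged G = 2 * wiener G ↔
      ∀ B : G.Subgraph, IsBlock G B →
        ∃ n : ℕ, 3 ≤ n ∧ Even n ∧ Nonempty (B.coe ≃g SimpleGraph.cycleGraph n) := by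
  rw [szeged_eq_two_mul_wiener_iff_of_disCount_le hG.disCount_le]
  constructor
  · intro h B hB
    rcases hG.2 B hB with hE | ⟨n, hn, ⟨φ⟩⟩
    · exact absurd hE (hB.not_isEdgeBlock_of_disCount_eq hG.1 h)
    · exact ⟨n, hn, hB.even_of_disCount_eq hG.1 hn φ h, ⟨φ⟩⟩
  · intro h
    refine block_induction hG.1 (fun B hB u hu v hv => ?_) fun u w v hw huw hwv => ?_
    · obtain ⟨n, hn, heven, ⟨φ⟩⟩ := h B hB
      rw [hB.disCount_eq_of_iso_cycleGraph hG.1 hn φ hu hv, Nat.even_iff.1 heven, Nat.sub_zero]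
    · rw [hw.disCount_eq hG.1, hw.dist_eq hG.1, huw, hwv, mul_add]
end
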